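/- arXiv:2211.13273 — 2 statements merged into one kernel-verified Lean document; each statement's English description precedes it below -/
import Mathlib

section
/- Let ψ = e^{πi/4} and consider the matrices S_1 (the permutation matrix exchanging x_0 ↔ x_2 and x_1 ↔ x_3), S_2 (the permutation matrix exchanging x_0 ↔ x_1 and x_2 ↔ x_3), T_1 = diag(1,1,−1,−1), T_2 = diag(1,−1,1,−1), T = (ψ/√2)·[[−i,0,0,i],[0,1,1,0],[1,0,0,1],[0,−i,i,0]], and R² = [[0,i,0,0],[i,0,0,0],[0,0,−1,0],[0,0,0,−1]] (the generators of the primitive group (14°) ≅ ℤ_2^4 ⋊ D_{10} in PGL_4(ℂ)). If f ∈ ℂ[x_0,x_1,x_2,x_3] is a homogeneous polynomial of degree 4 such that for every M ∈ {S_1, S_2, T_1, T_2, T, R²} there exists λ ∈ ℂ* with f(Mx) = λ·f(x), then f is a scalar multiple of k = x_0^4 + x_1^4 + x_2^4 + x_3^4 + 6(x_0^2x_1^2 − x_1^2x_2^2 + x_1^2x_3^2 + x_0^2x_2^2 − x_0^2x_3^2 + x_2^2x_3^2). -/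
open MvPolynomial Complex

/-- The action of a matrix on a polynomial: `(A f)(x) = f (A x)`. -/
noncomputable def matAct {N : ℕ} (A : Matrix (Fin N) (Fin N) ℂ)
    (f : MvPolynomial (Fin N) ℂ) : MvPolynomial (Fin N) ℂ :=
  MvPolynomial.aeval (fun i => ∑ j, MvPolynomial.C (A i j) * MvPolynomial.X j) f

/-- `ψ = e^{πi/4}`, a primitive 8th root of unity. -/
noncomputable def ψ : ℂ := Complex.exp (Real.pi * Complex.I / 4)

/-- `S₁`: the permutation matrix exchanging `x₀ ↔ x₂` and `x₁ ↔ x₃`. -/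
def S₁ : Matrix (Fin 4) (Fin 4) ℂ :=
  !![0, 0, 1, 0; 0, 0, 0, 1; 1, 0, 0, 0; 0, 1, 0, 0]

/-- `S₂`: the permutation matrix exchanging `x₀ ↔ x₁` and `x₂ ↔ x₃`. -/
def S₂ : Matrix (Fin 4) (Fin 4) ℂ :=
  !![0, 1, 0, 0; 1, 0, 0, 0; 0, 0, 0, 1; 0, 0, 1, 0]

/-- `T₁ = diag(1, 1, −1, −1)`. -/
def T₁ : Matrix (Fin 4) (Fin 4) ℂ :=
  !![1, 0, 0, 0; 0, 1, 0, 0; 0, 0, -1, 0; 0, 0, 0, -1]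

/-- `T₂ = diag(1, −1, 1, −1)`. -/
def T₂ : Matrix (Fin 4) (Fin 4) ℂ :=
  !![1, 0, 0, 0; 0, -1, 0, 0; 0, 0, 1, 0; 0, 0, 0, -1]

/-- `T = (ψ/√2)·[[−i,0,0,i],[0,1,1,0],[1,0,0,1],[0,−i,i,0]]`. -/
noncomputable def Tmat : Matrix (Fin 4) (Fin 4) ℂ :=
  (ψ / (Real.sqrt 2 : ℂ)) •
    !![-Complex.I, 0, 0, Complex.I; 0, 1, 1, 0; 1, 0, 0, 1;
       0, -Complex.I, Complex.I, 0]

/-- `R² = [[0,i,0,0],[i,0,0,0],[0,0,−1,0],[0,0,0,−1]]`. -/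
def R2 : Matrix (Fin 4) (Fin 4) ℂ :=
  !![0, Complex.I, 0, 0; Complex.I, 0, 0, 0; 0, 0, -1, 0; 0, 0, 0, -1]

/-- The quartic form
`k = x₀⁴ + x₁⁴ + x₂⁴ + x₃⁴ + 6(x₀²x₁² − x₁²x₂² + x₁²x₃² + x₀²x₂² − x₀²x₃² + x₂²x₃²)`. -/
noncomputable def kQuartic : MvPolynomial (Fin 4) ℂ :=
  X 0 ^ 4 + X 1 ^ 4 + X 2 ^ 4 + X 3 ^ 4 +
    6 * (X 0 ^ 2 * X 1 ^ 2 - X 1 ^ 2 * X 2 ^ 2 + X 1 ^ 2 * X 3 ^ 2 +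
      X 0 ^ 2 * X 2 ^ 2 - X 0 ^ 2 * X 3 ^ 2 + X 2 ^ 2 * X 3 ^ 2)


lemma matAct_mul (A B : Matrix (Fin 4) (Fin 4) ℂ) (f : MvPolynomial (Fin 4) ℂ) :
    matAct (A * B) f = matAct B (matAct A f) := by
  unfold matAct
  rw [← AlgHom.comp_apply, comp_aeval]
  congr 2
  funext i
  simp only [map_sum, map_mul, aeval_X, Matrix.mul_apply, Finset.sum_mul, Finset.mul_sum,
    algHom_C, MvPolynomial.algebraMap_eq]
  rw [Finset.sum_comm]
  simp [mul_assoc]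

lemma matAct_eval (A : Matrix (Fin 4) (Fin 4) ℂ) (f : MvPolynomial (Fin 4) ℂ) (x : Fin 4 → ℂ) :
    eval x (matAct A f) = eval (A.mulVec x) f := by
  unfold matAct
  induction f using MvPolynomial.induction_on with
  | C a => simp
  | add p q hp hq => simp only [map_add, hp, hq]
  | mul_X p i hp =>
    simp only [map_mul, hp, aeval_X, eval_X, map_sum, eval_C]
    rfl

lemma matAct_smul (s : ℂ) (A : Matrix (Fin 4) (Fin 4) ℂ) (f : MvPolynomial (Fin 4) ℂ)
    (hf : f.IsHomogeneous 4) : matAct (s • A) f = s ^ 4 • matAct A f := by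
  apply MvPolynomial.funext
  intro x
  rw [smul_eval, matAct_eval, matAct_eval, Matrix.smul_mulVec]
  rw [eval_eq', eval_eq', Finset.mul_sum]
  refine Finset.sum_congr rfl fun m hm => ?_
  have h := hf (mem_support_iff.1 hm)
  rw [Finsupp.weight_apply, Finsupp.sum_fintype _ _ (by simp)] at h
  simp only [Fin.sum_univ_four, Pi.one_apply, smul_eq_mul, mul_one] at h
  simp only [Fin.prod_univ_four, Pi.smul_apply, smul_eq_mul, mul_pow]
  have h4 : s ^ 4 = s ^ m 0 * s ^ m 1 * s ^ m 2 * s ^ m 3 := by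
    rw [← pow_add, ← pow_add, ← pow_add, h]
  rw [h4]
  ring

lemma coeff_diag (d : Fin 4 → ℂ) (f : MvPolynomial (Fin 4) ℂ) (m : Fin 4 →₀ ℕ) :
    coeff m (matAct (Matrix.diagonal d) f) = (∏ i, d i ^ m i) * coeff m f := by
  have h1 : ∀ i, (∑ j, MvPolynomial.C (Matrix.diagonal d i j) * MvPolynomial.X j :
      MvPolynomial (Fin 4) ℂ) = C (d i) * X i := by
    intro i
    rw [Finset.sum_eq_single i]
    · simp
    · intro j _ hj
      simp [Matrix.diagonal_apply_ne _ hj.symm]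
    · simp
  unfold matAct
  simp only [h1]
  induction f using MvPolynomial.induction_on' with
  | add p q hp hq => simp only [map_add, coeff_add, hp, hq, mul_add]
  | monomial u a =>
    rw [aeval_monomial, Finsupp.prod_fintype _ _ (by simp)]
    simp only [mul_pow, Finset.prod_mul_distrib, ← map_pow, ← map_prod]
    rw [MvPolynomial.algebraMap_eq, ← mul_assoc, ← map_mul]
    have : (∏ i, X i ^ u i : MvPolynomial (Fin 4) ℂ) = monomial u 1 := by
      rw [monomial_eq, Finsupp.prod_fintype _ _ (by simp)]; simp
    rw [this, C_mul_monomial, coeff_monomial, coeff_monomial]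
    split_ifs with h
    · subst h; ring
    · simp

lemma expo : ∀ p < 5, ∀ q < 5, ∀ r < 5, ∀ t < 5, p + q + r + t = 4 → (r + t) % 2 = 0 →
    (q + t) % 2 = 0 →
    (p, q, r, t) ∈ ({(4,0,0,0), (0,4,0,0), (0,0,4,0), (0,0,0,4), (2,2,0,0),
    (0,0,2,2), (2,0,2,0), (0,2,0,2), (2,0,0,2), (0,2,2,0), (1,1,1,1)} :
      Finset (ℕ × ℕ × ℕ × ℕ)) := by
  intro p hp q hq r hr t ht h h1 h2
  interval_cases p <;> interval_cases q <;> try (exfalso; omega)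
  all_goals interval_cases r <;> try (exfalso; omega)
  all_goals
    interval_cases t <;> first
    | (exfalso; omega)
    | decide

lemma normal_form (f : MvPolynomial (Fin 4) ℂ) (hf : f.IsHomogeneous 4)
    (h1 : matAct T₁ f = f) (h2 : matAct T₂ f = f) :
    ∃ a₀ a₁ a₂ a₃ b₁ b₂ b₃ b₄ b₅ b₆ e : ℂ, ∀ x : Fin 4 → ℂ, eval x f =
      a₀ * x 0 ^ 4 + a₁ * x 1 ^ 4 + a₂ * x 2 ^ 4 + a₃ * x 3 ^ 4
      + b₁ * (x 0 ^ 2 * x 1 ^ 2) + b₂ * (x 2 ^ 2 * x 3 ^ 2)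
      + b₃ * (x 0 ^ 2 * x 2 ^ 2) + b₄ * (x 1 ^ 2 * x 3 ^ 2)
      + b₅ * (x 0 ^ 2 * x 3 ^ 2) + b₆ * (x 1 ^ 2 * x 2 ^ 2)
      + e * (x 0 * x 1 * x 2 * x 3) := by
  have t1 : T₁ = Matrix.diagonal ![1, 1, -1, -1] := by
    ext i j; fin_cases i <;> fin_cases j <;> simp [T₁]
  have t2 : T₂ = Matrix.diagonal ![1, -1, 1, -1] := by
    ext i j; fin_cases i <;> fin_cases j <;> simp [T₂]
  let g : ℕ × ℕ × ℕ × ℕ → (Fin 4 →₀ ℕ) := fun p =>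
    Finsupp.equivFunOnFinite.symm ![p.1, p.2.1, p.2.2.1, p.2.2.2]
  have hg : Function.Injective g := by
    rintro ⟨p0, p1, p2, p3⟩ ⟨q0, q1, q2, q3⟩ h
    have h' := Finsupp.equivFunOnFinite.symm.injective h
    simp at h'
    simp [h']
  let s : Finset (ℕ × ℕ × ℕ × ℕ) := {(4,0,0,0), (0,4,0,0), (0,0,4,0), (0,0,0,4), (2,2,0,0),
    (0,0,2,2), (2,0,2,0), (0,2,0,2), (2,0,0,2), (0,2,2,0), (1,1,1,1)}
  have hs : f.support ⊆ s.map ⟨g, hg⟩ := by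
    intro m hm
    have hc := mem_support_iff.1 hm
    have h := hf hc
    rw [Finsupp.weight_apply, Finsupp.sum_fintype _ _ (by simp)] at h
    simp only [Fin.sum_univ_four, Pi.one_apply, smul_eq_mul, mul_one] at h
    have k1 := coeff_diag ![1, 1, -1, -1] f m
    have k2 := coeff_diag ![1, -1, 1, -1] f m
    rw [← t1, h1] at k1
    rw [← t2, h2] at k2
    have k1' := mul_right_cancel₀ hc (k1.symm.trans (one_mul _).symm)
    have k2' := mul_right_cancel₀ hc (k2.symm.trans (one_mul _).symm)
    simp [Fin.prod_univ_four, ← pow_add] at k1' k2'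
    rw [neg_one_pow_eq_one_iff_even (by norm_num)] at k1' k2'
    rw [Finset.mem_map]
    refine ⟨(m 0, m 1, m 2, m 3), ?_, ?_⟩
    · obtain ⟨u, hu⟩ := k1'
      obtain ⟨v, hv⟩ := k2'
      exact expo (m 0) (by omega) (m 1) (by omega) (m 2) (by omega) (m 3) (by omega) h
        (by omega) (by omega)
    · ext i; fin_cases i <;> simp [g]
  refine ⟨coeff (g (4,0,0,0)) f, coeff (g (0,4,0,0)) f, coeff (g (0,0,4,0)) f,
    coeff (g (0,0,0,4)) f, coeff (g (2,2,0,0)) f, coeff (g (0,0,2,2)) f, coeff (g (2,0,2,0)) f,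
    coeff (g (0,2,0,2)) f, coeff (g (2,0,0,2)) f, coeff (g (0,2,2,0)) f,
    coeff (g (1,1,1,1)) f, fun x => ?_⟩
  rw [eval_eq', Finset.sum_subset hs (by
    intro m _ hm
    rw [notMem_support_iff.1 hm, zero_mul]), Finset.sum_map]
  simp [s, Fin.prod_univ_four, g]
  ring

/-- The unscaled version of `Tmat`. -/
noncomputable def T0 : Matrix (Fin 4) (Fin 4) ℂ :=
    !![-Complex.I, 0, 0, Complex.I; 0, 1, 1, 0; 1, 0, 0, 1;
       0, -Complex.I, Complex.I, 0]

lemma rel1 : T₂ * T0 = T0 * (T₁ * T₂) := by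
  ext i j; fin_cases i <;> fin_cases j <;>
    simp [T₁, T₂, T0, Matrix.mul_apply, Fin.sum_univ_four]

lemma rel2 : S₂ * T0 = (-Complex.I) • (T0 * (S₁ * T₁)) := by
  ext i j; fin_cases i <;> fin_cases j <;>
    simp [T₁, S₁, S₂, T0, Matrix.mul_apply, Fin.sum_univ_four]

lemma rel3 : S₁ * T0 = (-Complex.I) • (T0 * (S₁ * S₂ * T₁)) := by
  ext i j; fin_cases i <;> fin_cases j <;>
    simp [T₁, S₁, S₂, T0, Matrix.mul_apply, Fin.sum_univ_four]

lemma rel4 : T₁ * T0 = (-1 : ℂ) • (T0 * (S₁ * S₂ * (T₁ * T₂))) := by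
  ext i j; fin_cases i <;> fin_cases j <;>
    simp [T₁, T₂, S₁, S₂, T0, Matrix.mul_apply, Fin.sum_univ_four]

lemma semi_mul {f : MvPolynomial (Fin 4) ℂ} {A B : Matrix (Fin 4) (Fin 4) ℂ} {a b : ℂ}
    (hA : matAct A f = a • f) (hB : matAct B f = b • f) : matAct (A * B) f = (a * b) • f := by
  rw [matAct_mul, hA]
  have : matAct B (a • f) = a • matAct B f := by unfold matAct; rw [map_smul]
  rw [this, hB, smul_smul]

theorem stmt13 (f : MvPolynomial (Fin 4) ℂ) (hf : f.IsHomogeneous 4)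
    (hinv : ∀ M ∈ ({S₁, S₂, T₁, T₂, Tmat, R2} : Set (Matrix (Fin 4) (Fin 4) ℂ)),
      ∃ c : ℂ, c ≠ 0 ∧ matAct M f = c • f) :
    ∃ c : ℂ, f = c • kQuartic := by
  by_cases hf0 : f = 0
  · exact ⟨0, by simp [hf0]⟩
  obtain ⟨c, hc, hS1⟩ := hinv S₁ (by simp)
  obtain ⟨d, hd, hS2⟩ := hinv S₂ (by simp)
  obtain ⟨a, ha, hT1⟩ := hinv T₁ (by simp)
  obtain ⟨b, hb, hT2⟩ := hinv T₂ (by simp)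
  obtain ⟨l', hl', hT'⟩ := hinv Tmat (by simp)
  obtain ⟨μ, hμ, hR⟩ := hinv R2 (by simp)
  have hs : ψ / (Real.sqrt 2 : ℂ) ≠ 0 := by
    apply div_ne_zero (Complex.exp_ne_zero _)
    exact_mod_cast (Real.sqrt_pos.2 (by norm_num)).ne'
  obtain ⟨L, hL, hT⟩ : ∃ L : ℂ, L ≠ 0 ∧ matAct T0 f = L • f := by
    refine ⟨((ψ / (Real.sqrt 2 : ℂ))⁻¹) ^ 4 * l', mul_ne_zero (pow_ne_zero _ (inv_ne_zero hs)) hl', ?_⟩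
    have : T0 = (ψ / (Real.sqrt 2 : ℂ))⁻¹ • Tmat := by
      unfold Tmat T0
      rw [smul_smul, inv_mul_cancel₀ hs, one_smul]
    rw [this, matAct_smul _ _ _ hf, hT', smul_smul]
  have uniq : ∀ u v : ℂ, u • f = v • f → u = v := fun u v h => smul_left_injective ℂ hf0 h
  have hI : (-Complex.I) ^ 4 = 1 := by rw [Even.neg_pow (by decide), Complex.I_pow_four]
  have e1 := semi_mul hT2 hT
  rw [rel1, semi_mul hT (semi_mul hT1 hT2)] at e1
  have e2 := semi_mul hS2 hT
  rw [rel2, matAct_smul _ _ _ hf, semi_mul hT (semi_mul hS1 hT1), hI, one_smul] at e2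
  have e3 := semi_mul hS1 hT
  rw [rel3, matAct_smul _ _ _ hf, semi_mul hT (semi_mul (semi_mul hS1 hS2) hT1), hI, one_smul] at e3
  have e4 := semi_mul hT1 hT
  rw [rel4, matAct_smul _ _ _ hf,
    semi_mul hT (semi_mul (semi_mul hS1 hS2) (semi_mul hT1 hT2)),
    show (-1 : ℂ) ^ 4 = 1 by norm_num, one_smul] at e4
  replace e1 := uniq _ _ e1
  replace e2 := uniq _ _ e2
  replace e3 := uniq _ _ e3
  replace e4 := uniq _ _ e4
  have a1 : a = 1 := by
    apply mul_left_cancel₀ (mul_ne_zero hL hb); linear_combination e1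
  subst a1
  have d1 : d = 1 := by
    apply mul_left_cancel₀ (mul_ne_zero hL hc); linear_combination e3
  subst d1
  have c1 : c = 1 := by
    apply mul_left_cancel₀ hL; linear_combination e2
  subst c1
  have b1 : b = 1 := by
    apply mul_left_cancel₀ hL; linear_combination e4
  subst b1
  rw [one_smul] at hS1 hS2 hT1 hT2
  obtain ⟨a₀, a₁, a₂, a₃, b₁, b₂, b₃, b₄, b₅, b₆, e, hF⟩ := normal_form f hf hT1 hT2
  have E : ∀ (M : Matrix (Fin 4) (Fin 4) ℂ) (u : ℂ), matAct M f = u • f → ∀ x : Fin 4 → ℂ,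
      eval (M.mulVec x) f = u * eval x f := by
    intro M u h x
    rw [← matAct_eval, h, smul_eval]
  have P1 := E S₁ 1 (by rw [hS1, one_smul])
  have P2 := E S₂ 1 (by rw [hS2, one_smul])
  have PT := E T0 L hT
  have PR := E R2 μ hR
  simp only [hF] at P1 P2 PT PR
  have I2 : Complex.I ^ 2 = -1 := Complex.I_sq
  have I4 : Complex.I ^ 4 = 1 := Complex.I_pow_four
  have q1 : a₂ = a₀ := by
    simpa [S₁, Matrix.mulVec, dotProduct, Fin.sum_univ_four] using P1 ![1, 0, 0, 0]
  have q2 : a₃ = a₁ := by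
    simpa [S₁, Matrix.mulVec, dotProduct, Fin.sum_univ_four] using P1 ![0, 1, 0, 0]
  have q3 : a₁ = a₀ := by
    simpa [S₂, Matrix.mulVec, dotProduct, Fin.sum_univ_four] using P2 ![1, 0, 0, 0]
  subst q1 q2 q3
  have q4 : b₂ = b₁ := by
    simpa [S₁, Matrix.mulVec, dotProduct, Fin.sum_univ_four] using P1 ![1, 1, 0, 0]
  have q5 : b₆ = b₅ := by
    simpa [S₁, Matrix.mulVec, dotProduct, Fin.sum_univ_four] using P1 ![1, 0, 0, 1]
  have q6 : b₄ = b₃ := by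
    simpa [S₂, Matrix.mulVec, dotProduct, Fin.sum_univ_four] using P2 ![1, 0, 1, 0]
  subst q4 q5 q6
  have r1 := PR ![1, 0, 0, 0]
  have r2 := PR ![1, 1, 0, 0]
  have r3 := PR ![1, 0, 1, 0]
  have r4 := PR ![1, 0, 0, 1]
  have r5 := PR ![1, 1, 1, 1]
  have t1 := PT ![1, 0, 0, 0]
  have t2 := PT ![1, 1, 0, 0]
  have t3 := PT ![1, 0, 1, 0]
  have t4 := PT ![1, 0, 0, 1]
  have t5 := PT ![1, 1, 1, 1]
  simp [R2, Matrix.mulVec, dotProduct, Fin.sum_univ_four] at r1 r2 r3 r4 r5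
  simp [T0, Matrix.mulVec, dotProduct, Fin.sum_univ_four] at t1 t2 t3 t4 t5
  have rb : b₂ = μ * b₂ := by linear_combination r2 - 2 * r1
  have rd : -b₆ = μ * b₄ := by linear_combination r3 - 2 * r1
  have rc : -b₄ = μ * b₆ := by linear_combination r4 - 2 * r1
  have re : -e = μ * e := by linear_combination r5 - 4 * r1 - 2 * rb - 2 * rd - 2 * rc
  have ta : 2 * a₃ - b₄ = L * a₃ := by linear_combination t1 - a₃ * hI
  have tb : -2 * b₂ + 2 * b₆ - 2 * b₄ + 2 * b₄ - e = L * b₂ := by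
    linear_combination t2 - 2 * ta - 2 * a₃ * hI
  have tc : -2 * b₂ + 2 * b₆ + e = L * b₄ := by
    linear_combination t3 - 2 * ta - a₃ * hI
  have td : 12 * a₃ + 2 * b₄ = L * b₆ := by linear_combination t4 - 2 * ta
  have te : 8 * b₂ + 8 * b₆ = L * e := by
    linear_combination t5 - 4 * ta - 2 * tb - 2 * tc - 2 * td
  have fin : b₂ = 6 * a₃ ∧ b₄ = 6 * a₃ ∧ b₆ = -6 * a₃ ∧ e = 0 := by
    by_cases h : μ = 1
    · subst h
      have e0 : e = 0 := by linear_combination (-1 / 2 : ℂ) * re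
      subst e0
      have h6 : b₆ = -b₄ := by linear_combination -rd
      subst h6
      have h2 : b₂ = b₄ := by linear_combination (1 / 8 : ℂ) * te
      subst h2
      have : b₂ = 6 * a₃ := by linear_combination (-1 / 2 : ℂ) * (td + tb)
      refine ⟨this, this, ?_, rfl⟩
      rw [this]; ring
    · have h' : (1 - μ) ≠ 0 := sub_ne_zero.2 (Ne.symm h)
      have ha0 : a₃ = 0 := by
        apply (mul_eq_zero.1 (show (1 - μ) * a₃ = 0 by linear_combination r1)).resolve_left h'
      have hb0 : b₂ = 0 := by
        apply (mul_eq_zero.1 (show (1 - μ) * b₂ = 0 by linear_combination rb)).resolve_left h'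
      subst ha0 hb0
      have h4 : b₄ = 0 := by linear_combination -ta
      subst h4
      have h6 : b₆ = 0 := by linear_combination -rd
      subst h6
      have he : e = 0 := by linear_combination -tb
      simp [he]
  obtain ⟨f1, f2, f3, f4⟩ := fin
  refine ⟨a₃, MvPolynomial.funext fun x => ?_⟩
  rw [hF, f1, f2, f3, f4, smul_eval]
  simp only [kQuartic, map_add, map_sub, map_mul, map_pow, eval_X, map_ofNat]
  ring
end

section
/- Let ω = e^{2πi/3} (a primitive cube root of unity) and consider the matrices F_1 = diag(1,1,ω,ω²), F_2 = (1/√3)·[[1,0,0,√2],[0,−1,√2,0],[0,√2,1,0],[√2,0,0,−1]], F_3 = [[√3/2,1/2,0,0],[1/2,−√3/2,0,0],[0,0,0,1],[0,0,1,0]], and F_4 = [[0,1,0,0],[1,0,0,0],[0,0,0,−1],[0,0,−1,0]] (the generators of the primitive group (C) ≅ 𝔄_6 in PGL_4(ℂ)). If f ∈ ℂ[x_0,x_1,x_2,x_3] is a homogeneous polynomial of degree 4 such that for every M ∈ {F_1, F_2, F_3, F_4} there exists λ ∈ ℂ* with f(Mx) = λ·f(x), then f = 0. -/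
open MvPolynomial Complex

/-- `ω = e^{2πi/3}`, a primitive cube root of unity. -/
noncomputable def ω : ℂ := Complex.exp (2 * Real.pi * Complex.I / 3)

/-- `F₁ = diag(1, 1, ω, ω²)`. -/
noncomputable def F₁ : Matrix (Fin 4) (Fin 4) ℂ :=
  !![1, 0, 0, 0; 0, 1, 0, 0; 0, 0, ω, 0; 0, 0, 0, ω ^ 2]

/-- `F₂ = (1/√3)·[[1,0,0,√2],[0,−1,√2,0],[0,√2,1,0],[√2,0,0,−1]]`. -/
noncomputable def F₂ : Matrix (Fin 4) (Fin 4) ℂ :=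
  (1 / (Real.sqrt 3 : ℂ)) •
    !![1, 0, 0, (Real.sqrt 2 : ℂ); 0, -1, (Real.sqrt 2 : ℂ), 0;
       0, (Real.sqrt 2 : ℂ), 1, 0; (Real.sqrt 2 : ℂ), 0, 0, -1]

/-- `F₃ = [[√3/2,1/2,0,0],[1/2,−√3/2,0,0],[0,0,0,1],[0,0,1,0]]`. -/
noncomputable def F₃ : Matrix (Fin 4) (Fin 4) ℂ :=
  !![(Real.sqrt 3 : ℂ) / 2, 1 / 2, 0, 0; 1 / 2, -(Real.sqrt 3 : ℂ) / 2, 0, 0;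
     0, 0, 0, 1; 0, 0, 1, 0]

/-- `F₄ = [[0,1,0,0],[1,0,0,0],[0,0,0,−1],[0,0,−1,0]]`. -/
def F₄ : Matrix (Fin 4) (Fin 4) ℂ :=
  !![0, 1, 0, 0; 1, 0, 0, 0; 0, 0, 0, -1; 0, 0, -1, 0]

lemma eval_matAct (A : Matrix (Fin 4) (Fin 4) ℂ) (f : MvPolynomial (Fin 4) ℂ) (v : Fin 4 → ℂ) :
    eval v (matAct A f) = eval (A.mulVec v) f := by
  unfold matAct
  induction f using MvPolynomial.induction_on with
  | C a => simp
  | add p q hp hq => simp only [map_add, hp, hq]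
  | mul_X p i hp =>
    simp only [map_mul, hp, aeval_X, eval_X]
    simp [Matrix.mulVec, dotProduct]

lemma eval_expand (f : MvPolynomial (Fin 4) ℂ) (hf : f.IsHomogeneous 4) (v : Fin 4 → ℂ) :
    eval v f = ∑ t ∈ Finset.Nat.antidiagonalTuple 4 4,
      coeff (Finsupp.equivFunOnFinite.symm t) f * ∏ i, v i ^ t i := by
  classical
  rw [MvPolynomial.eval_eq']
  have h : f.support ⊆ (Finset.Nat.antidiagonalTuple 4 4).map
      (Finsupp.equivFunOnFinite : (Fin 4 →₀ ℕ) ≃ (Fin 4 → ℕ)).symm.toEmbedding := by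
    intro d hd
    have := hf (mem_support_iff.mp hd)
    rw [Finset.mem_map]
    refine ⟨Finsupp.equivFunOnFinite d, ?_, by simp⟩
    rw [Finset.Nat.mem_antidiagonalTuple]
    rw [Finsupp.weight_apply, Finsupp.sum_fintype _ _ (by simp)] at this
    simpa using this
  rw [Finset.sum_subset h, Finset.sum_map]
  · simp
  · intro d _ hd
    simp [notMem_support_iff.mp hd]

lemma eval_expand' (f : MvPolynomial (Fin 4) ℂ) (hf : f.IsHomogeneous 4) :
    ∃ k : (Fin 4 → ℕ) → ℂ, ∀ a b c d : ℂ, eval ![a, b, c, d] f =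
      ((List.Nat.antidiagonalTuple 4 4).map
        fun t => k t * (a ^ t 0 * b ^ t 1 * c ^ t 2 * d ^ t 3)).sum := by
  refine ⟨fun t => coeff (Finsupp.equivFunOnFinite.symm t) f, fun a b c d => ?_⟩
  rw [eval_expand f hf]
  simp only [Fin.prod_univ_four]
  rfl

lemma omega_eq : ω = -1 / 2 + (Real.sqrt 3 : ℂ) / 2 * I := by
  unfold ω
  have : (2 * Real.pi * I / 3 : ℂ) = ((2 * Real.pi / 3 : ℝ) : ℂ) * I := by push_cast; ring
  rw [this, Complex.exp_mul_I, ← Complex.ofReal_cos, ← Complex.ofReal_sin]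
  have e : 2 * Real.pi / 3 = Real.pi - Real.pi / 3 := by ring
  rw [e, Real.cos_pi_sub, Real.sin_pi_sub, Real.cos_pi_div_three, Real.sin_pi_div_three]
  push_cast; ring

/-- The `F₁`-invariant part of a quartic. -/
lemma reduce13 (k : (Fin 4 → ℕ) → ℂ) (w : ℂ) (hw : w ^ 2 + w + 1 = 0) (g : ℂ → ℂ → ℂ → ℂ → ℂ)
    (hg : ∀ a b c d : ℂ, g a b c d = ((List.Nat.antidiagonalTuple 4 4).map
        fun t => k t * (a ^ t 0 * b ^ t 1 * c ^ t 2 * d ^ t 3)).sum)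
    (h : ∀ a b c d : ℂ, g a b (w * c) (w ^ 2 * d) = g a b c d) :
    ∃ p0 p1 p2 p3 p4 q0 q1 q2 r m0 m1 n0 n1 : ℂ, ∀ a b c d : ℂ, g a b c d =
      p0 * a ^ 4 + p1 * a ^ 3 * b + p2 * a ^ 2 * b ^ 2 + p3 * a * b ^ 3 + p4 * b ^ 4
      + (q0 * a ^ 2 + q1 * a * b + q2 * b ^ 2) * (c * d) + r * (c * d) ^ 2
      + (m0 * a + m1 * b) * c ^ 3 + (n0 * a + n1 * b) * d ^ 3 := by
  refine ⟨k ![4,0,0,0], k ![3,1,0,0], k ![2,2,0,0], k ![1,3,0,0], k ![0,4,0,0],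
    k ![2,0,1,1], k ![1,1,1,1], k ![0,2,1,1], k ![0,0,2,2], k ![1,0,3,0], k ![0,1,3,0],
    k ![1,0,0,3], k ![0,1,0,3], fun a b c d => ?_⟩
  have e1 := h a b c d
  have e2 := h a b (w * c) (w ^ 2 * d)
  have e3 : g a b c d = (g a b c d + g a b (w * c) (w ^ 2 * d)
      + g a b (w * (w * c)) (w ^ 2 * (w ^ 2 * d))) / 3 := by
    rw [e2, e1]; ring
  have L : List.Nat.antidiagonalTuple 4 4 = [
    ![0, 0, 0, 4], ![0, 0, 1, 3], ![0, 0, 2, 2], ![0, 0, 3, 1], ![0, 0, 4, 0],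
    ![0, 1, 0, 3], ![0, 1, 1, 2], ![0, 1, 2, 1], ![0, 1, 3, 0], ![0, 2, 0, 2],
    ![0, 2, 1, 1], ![0, 2, 2, 0], ![0, 3, 0, 1], ![0, 3, 1, 0], ![0, 4, 0, 0],
    ![1, 0, 0, 3], ![1, 0, 1, 2], ![1, 0, 2, 1], ![1, 0, 3, 0], ![1, 1, 0, 2],
    ![1, 1, 1, 1], ![1, 1, 2, 0], ![1, 2, 0, 1], ![1, 2, 1, 0], ![1, 3, 0, 0],
    ![2, 0, 0, 2], ![2, 0, 1, 1], ![2, 0, 2, 0], ![2, 1, 0, 1], ![2, 1, 1, 0],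
    ![2, 2, 0, 0], ![3, 0, 0, 1], ![3, 0, 1, 0], ![3, 1, 0, 0], ![4, 0, 0, 0]] := by
    decide
  rw [e3]
  simp only [hg, L, List.map_cons, List.map_nil, List.sum_cons, List.sum_nil]
  simp only [Matrix.cons_val, pow_zero, pow_one, mul_one, one_mul, add_zero]
  linear_combination (1 / 3) * hw * (
    (0 + 1 * w ^ 0) * (k ![0, 3, 1, 0] * a ^ 0 * b ^ 3 * c ^ 1 * d ^ 0 +
      k ![1, 2, 1, 0] * a ^ 1 * b ^ 2 * c ^ 1 * d ^ 0 +
      k ![2, 1, 1, 0] * a ^ 2 * b ^ 1 * c ^ 1 * d ^ 0 +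
      k ![3, 0, 1, 0] * a ^ 3 * b ^ 0 * c ^ 1 * d ^ 0) +
    (0 + 1 * w ^ 0 - 1 * w ^ 1 + 1 * w ^ 2) * (k ![0, 2, 2, 0] * a ^ 0 * b ^ 2 * c ^ 2 * d ^ 0 +
      k ![0, 3, 0, 1] * a ^ 0 * b ^ 3 * c ^ 0 * d ^ 1 +
      k ![1, 1, 2, 0] * a ^ 1 * b ^ 1 * c ^ 2 * d ^ 0 +
      k ![1, 2, 0, 1] * a ^ 1 * b ^ 2 * c ^ 0 * d ^ 1 +
      k ![2, 0, 2, 0] * a ^ 2 * b ^ 0 * c ^ 2 * d ^ 0 +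
      k ![2, 1, 0, 1] * a ^ 2 * b ^ 1 * c ^ 0 * d ^ 1 +
      k ![3, 0, 0, 1] * a ^ 3 * b ^ 0 * c ^ 0 * d ^ 1) +
    (0 - 2 * w ^ 0 + 2 * w ^ 1 - 1 * w ^ 3 + 1 * w ^ 4) * (k ![0, 1, 3, 0] * a ^ 0 * b ^ 1 * c ^ 3 * d ^ 0 +
      k ![0, 2, 1, 1] * a ^ 0 * b ^ 2 * c ^ 1 * d ^ 1 +
      k ![1, 0, 3, 0] * a ^ 1 * b ^ 0 * c ^ 3 * d ^ 0 +
      k ![1, 1, 1, 1] * a ^ 1 * b ^ 1 * c ^ 1 * d ^ 1 +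
      k ![2, 0, 1, 1] * a ^ 2 * b ^ 0 * c ^ 1 * d ^ 1) +
    (0 + 1 * w ^ 0 - 1 * w ^ 1 + 1 * w ^ 3 - 1 * w ^ 5 + 1 * w ^ 6) * (k ![0, 0, 4, 0] * a ^ 0 * b ^ 0 * c ^ 4 * d ^ 0 +
      k ![0, 1, 2, 1] * a ^ 0 * b ^ 1 * c ^ 2 * d ^ 1 +
      k ![0, 2, 0, 2] * a ^ 0 * b ^ 2 * c ^ 0 * d ^ 2 +
      k ![1, 0, 2, 1] * a ^ 1 * b ^ 0 * c ^ 2 * d ^ 1 +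
      k ![1, 1, 0, 2] * a ^ 1 * b ^ 1 * c ^ 0 * d ^ 2 +
      k ![2, 0, 0, 2] * a ^ 2 * b ^ 0 * c ^ 0 * d ^ 2) +
    (0 + 1 * w ^ 0 - 1 * w ^ 1 + 1 * w ^ 3 - 1 * w ^ 4 + 1 * w ^ 5 - 1 * w ^ 7 + 1 * w ^ 8) * (k ![0, 0, 3, 1] * a ^ 0 * b ^ 0 * c ^ 3 * d ^ 1 +
      k ![0, 1, 1, 2] * a ^ 0 * b ^ 1 * c ^ 1 * d ^ 2 +
      k ![1, 0, 1, 2] * a ^ 1 * b ^ 0 * c ^ 1 * d ^ 2) +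
    (0 - 2 * w ^ 0 + 2 * w ^ 1 - 2 * w ^ 3 + 2 * w ^ 4 - 1 * w ^ 6 + 1 * w ^ 7 - 1 * w ^ 9 + 1 * w ^ 10) * (k ![0, 0, 2, 2] * a ^ 0 * b ^ 0 * c ^ 2 * d ^ 2 +
      k ![0, 1, 0, 3] * a ^ 0 * b ^ 1 * c ^ 0 * d ^ 3 +
      k ![1, 0, 0, 3] * a ^ 1 * b ^ 0 * c ^ 0 * d ^ 3) +
    (0 + 1 * w ^ 0 - 1 * w ^ 1 + 1 * w ^ 3 - 1 * w ^ 4 + 1 * w ^ 6 - 1 * w ^ 8 + 1 * w ^ 9 - 1 * w ^ 11 + 1 * w ^ 12) * (k ![0, 0, 1, 3] * a ^ 0 * b ^ 0 * c ^ 1 * d ^ 3) +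
    (0 + 1 * w ^ 0 - 1 * w ^ 1 + 1 * w ^ 3 - 1 * w ^ 4 + 1 * w ^ 6 - 1 * w ^ 7 + 1 * w ^ 8 - 1 * w ^ 10 + 1 * w ^ 11 - 1 * w ^ 13 + 1 * w ^ 14) * (k ![0, 0, 0, 4] * a ^ 0 * b ^ 0 * c ^ 0 * d ^ 4))

theorem stmt19 (f : MvPolynomial (Fin 4) ℂ) (hf : f.IsHomogeneous 4)
    (hinv : ∀ M ∈ ({F₁, F₂, F₃, F₄} : Set (Matrix (Fin 4) (Fin 4) ℂ)),
      ∃ c : ℂ, c ≠ 0 ∧ matAct M f = c • f) :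
    f = 0 := by
  by_contra hne
  obtain ⟨k, hk⟩ := eval_expand' f hf
  obtain ⟨l1, -, h1⟩ := hinv F₁ (by simp)
  obtain ⟨l2, l2n, h2⟩ := hinv F₂ (by simp)
  obtain ⟨l3, l3n, h3⟩ := hinv F₃ (by simp)
  obtain ⟨l4, l4n, h4⟩ := hinv F₄ (by simp)
  obtain ⟨g, hg⟩ : ∃ g : ℂ → ℂ → ℂ → ℂ → ℂ, ∀ a b c d, g a b c d = eval ![a, b, c, d] f :=
    ⟨_, fun _ _ _ _ => rfl⟩
  have s3 : (Real.sqrt 3 : ℂ) ^ 2 = 3 := by rw [← Complex.ofReal_pow]; simp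
  have s2 : (Real.sqrt 2 : ℂ) ^ 2 = 2 := by rw [← Complex.ofReal_pow]; simp
  have inv3 : (1 / (Real.sqrt 3 : ℂ)) = (Real.sqrt 3 : ℂ) / 3 := by
    have : (Real.sqrt 3 : ℂ) ≠ 0 := by intro h; rw [h] at s3; norm_num at s3
    field_simp; exact s3.symm
  have hw := omega_eq
  have H1 : ∀ a b c d, g a b (ω * c) (ω ^ 2 * d) = l1 * g a b c d := by
    intro a b c d
    have := congrArg (eval ![a, b, c, d]) h1
    rw [eval_matAct, smul_eval] at this
    rw [hg, hg, ← this]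
    congr 2; funext i; fin_cases i <;> simp [F₁, Matrix.mulVec, dotProduct, Fin.sum_univ_four]
  have H2 : ∀ a b c d, g ((Real.sqrt 3 : ℂ) / 3 * (a + (Real.sqrt 2 : ℂ) * d))
      ((Real.sqrt 3 : ℂ) / 3 * (-b + (Real.sqrt 2 : ℂ) * c))
      ((Real.sqrt 3 : ℂ) / 3 * ((Real.sqrt 2 : ℂ) * b + c))
      ((Real.sqrt 3 : ℂ) / 3 * ((Real.sqrt 2 : ℂ) * a - d)) = l2 * g a b c d := by
    intro a b c d
    have := congrArg (eval ![a, b, c, d]) h2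
    rw [eval_matAct, smul_eval] at this
    rw [hg, hg, ← this]
    congr 2; funext i
    unfold F₂; rw [inv3]
    fin_cases i <;> simp [Matrix.mulVec, dotProduct, Fin.sum_univ_four] <;> ring
  have H3 : ∀ a b c d, g ((Real.sqrt 3 : ℂ) / 2 * a + b / 2) (a / 2 - (Real.sqrt 3 : ℂ) / 2 * b)
      d c = l3 * g a b c d := by
    intro a b c d
    have := congrArg (eval ![a, b, c, d]) h3
    rw [eval_matAct, smul_eval] at this
    rw [hg, hg, ← this]
    congr 2; funext i
    fin_cases i <;> simp [F₃, Matrix.mulVec, dotProduct, Fin.sum_univ_four] <;> ring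
  have H4 : ∀ a b c d, g b a (-d) (-c) = l4 * g a b c d := by
    intro a b c d
    have := congrArg (eval ![a, b, c, d]) h4
    rw [eval_matAct, smul_eval] at this
    rw [hg, hg, ← this]
    congr 2; funext i
    fin_cases i <;> simp [F₄, Matrix.mulVec, dotProduct, Fin.sum_univ_four]
  have Hs : ∀ z a b c d, g (z * a) (z * b) (z * c) (z * d) = z ^ 4 * g a b c d := by
    intro z a b c d
    rw [hg, hg, hk, hk, ← List.sum_map_mul_left]
    congr 1
    apply List.map_congr_left
    intro t ht
    rw [List.Nat.mem_antidiagonalTuple, Fin.sum_univ_four] at ht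
    have hz : z ^ 4 = z ^ (t 0 + t 1 + t 2 + t 3) := congrArg (z ^ ·) ht.symm
    rw [hz]; ring
  obtain ⟨a, b, c, d, hv⟩ : ∃ a b c d, g a b c d ≠ 0 := by
    by_contra! hz
    apply hne
    apply MvPolynomial.funext
    intro v
    have : v = ![v 0, v 1, v 2, v 3] := by funext i; fin_cases i <;> rfl
    rw [this, ← hg, hz]; simp
  clear h1 h2 h3 h4 hinv
  generalize (Real.sqrt 3 : ℂ) = x at *
  generalize (Real.sqrt 2 : ℂ) = y at *
  generalize ω = w at *
  have hI : I ^ 2 = -1 := I_sq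
  have hI4 : (-I) ^ 4 = 1 := by linear_combination (I ^ 2 - 1) * hI
  have hww : w ^ 2 + w + 1 = 0 := by grind
  have hw3 : w ^ 3 = 1 := by grind
  have K1 : ∀ a b c d, ∃ a' b' c' d', a' = a ∧ b' = b ∧ c' = w * c ∧ d' = w ^ 2 * d ∧
      g a' b' c' d' = l1 * g a b c d :=
    fun a b c d => ⟨_, _, _, _, rfl, rfl, rfl, rfl, H1 a b c d⟩
  have K2 : ∀ a b c d, ∃ a' b' c' d', a' = x / 3 * (a + y * d) ∧ b' = x / 3 * (-b + y * c) ∧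
      c' = x / 3 * (y * b + c) ∧ d' = x / 3 * (y * a - d) ∧
      g a' b' c' d' = l2 * g a b c d :=
    fun a b c d => ⟨_, _, _, _, rfl, rfl, rfl, rfl, H2 a b c d⟩
  have K3 : ∀ a b c d, ∃ a' b' c' d', a' = x / 2 * a + b / 2 ∧ b' = a / 2 - x / 2 * b ∧
      c' = d ∧ d' = c ∧ g a' b' c' d' = l3 * g a b c d :=
    fun a b c d => ⟨_, _, _, _, rfl, rfl, rfl, rfl, H3 a b c d⟩
  have K4 : ∀ a b c d, ∃ a' b' c' d', a' = b ∧ b' = a ∧ c' = -d ∧ d' = -c ∧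
      g a' b' c' d' = l4 * g a b c d :=
    fun a b c d => ⟨_, _, _, _, rfl, rfl, rfl, rfl, H4 a b c d⟩
  clear H2 H3 H4
  have w1 : l1 ^ 2 = 1 := by
    obtain ⟨va1, vb1, vc1, vd1, vha1, vhb1, vhc1, vhd1, vhg1⟩ := K1 a b c d
    obtain ⟨va2, vb2, vc2, vd2, vha2, vhb2, vhc2, vhd2, vhg2⟩ := K3 va1 vb1 vc1 vd1
    obtain ⟨va3, vb3, vc3, vd3, vha3, vhb3, vhc3, vhd3, vhg3⟩ := K1 va2 vb2 vc2 vd2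
    obtain ⟨ua1, ub1, uc1, ud1, uha1, uhb1, uhc1, uhd1, uhg1⟩ := K3 a b c d
    have qa : va3 = ua1 := by
      clear hk hg hf Hs H1 K1 K2 K3 K4 hv vhg1 vhg2 vhg3 uhg1
      subst_vars; grind
    have qb : vb3 = ub1 := by
      clear hk hg hf Hs H1 K1 K2 K3 K4 hv vhg1 vhg2 vhg3 uhg1
      subst_vars; grind
    have qc : vc3 = uc1 := by
      clear hk hg hf Hs H1 K1 K2 K3 K4 hv vhg1 vhg2 vhg3 uhg1
      subst_vars; grind
    have qd : vd3 = ud1 := by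
      clear hk hg hf Hs H1 K1 K2 K3 K4 hv vhg1 vhg2 vhg3 uhg1
      subst_vars; grind
    rw [qa, qb, qc, qd] at vhg3
    rw [vhg1] at vhg2
    rw [vhg2] at vhg3
    have z : (l3 * (l1 ^ 2 - 1)) * g a b c d = 0 := by
      linear_combination uhg1 - vhg3
    have z' := (mul_eq_zero.mp z).resolve_right hv
    clear * - z' l2n l3n l4n
    grind
  have w1' : l1 ^ 3 = 1 := by
    have e1 := H1 a b c d
    have e2 := H1 a b (w * c) (w ^ 2 * d)
    have e3 := H1 a b (w * (w * c)) (w ^ 2 * (w ^ 2 * d))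
    rw [e2, e1, show w * (w * (w * c)) = c by grind,
      show w ^ 2 * (w ^ 2 * (w ^ 2 * d)) = d by grind] at e3
    have z : (l1 ^ 3 - 1) * g a b c d = 0 := by
      linear_combination -e3
    have z' := (mul_eq_zero.mp z).resolve_right hv
    clear * - z' l2n l3n l4n
    grind
  have E1 : l1 = 1 := by linear_combination w1' - l1 * w1
  have E2 : l2 = 1 := by
    obtain ⟨va1, vb1, vc1, vd1, vha1, vhb1, vhc1, vhd1, vhg1⟩ := K1 a b c d
    obtain ⟨va2, vb2, vc2, vd2, vha2, vhb2, vhc2, vhd2, vhg2⟩ := K2 va1 vb1 vc1 vd1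
    obtain ⟨va3, vb3, vc3, vd3, vha3, vhb3, vhc3, vhd3, vhg3⟩ := K1 va2 vb2 vc2 vd2
    obtain ⟨ua1, ub1, uc1, ud1, uha1, uhb1, uhc1, uhd1, uhg1⟩ := K2 a b c d
    obtain ⟨ua2, ub2, uc2, ud2, uha2, uhb2, uhc2, uhd2, uhg2⟩ := K1 ua1 ub1 uc1 ud1
    obtain ⟨ua3, ub3, uc3, ud3, uha3, uhb3, uhc3, uhd3, uhg3⟩ := K1 ua2 ub2 uc2 ud2
    obtain ⟨ua4, ub4, uc4, ud4, uha4, uhb4, uhc4, uhd4, uhg4⟩ := K2 ua3 ub3 uc3 ud3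
    have hs := Hs (-I) ua4 ub4 uc4 ud4
    have qa : va3 = (-I) * ua4 := by
      clear hk hg hf Hs H1 K1 K2 K3 K4 hv hs vhg1 vhg2 vhg3 uhg1 uhg2 uhg3 uhg4
      subst_vars; grind
    have qb : vb3 = (-I) * ub4 := by
      clear hk hg hf Hs H1 K1 K2 K3 K4 hv hs vhg1 vhg2 vhg3 uhg1 uhg2 uhg3 uhg4
      subst_vars; grind
    have qc : vc3 = (-I) * uc4 := by
      clear hk hg hf Hs H1 K1 K2 K3 K4 hv hs vhg1 vhg2 vhg3 uhg1 uhg2 uhg3 uhg4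
      subst_vars; grind
    have qd : vd3 = (-I) * ud4 := by
      clear hk hg hf Hs H1 K1 K2 K3 K4 hv hs vhg1 vhg2 vhg3 uhg1 uhg2 uhg3 uhg4
      subst_vars; grind
    rw [qa, qb, qc, qd] at vhg3
    rw [vhg1] at vhg2
    rw [vhg2] at vhg3
    rw [uhg1] at uhg2
    rw [uhg2] at uhg3
    rw [uhg3] at uhg4
    rw [hs, hI4, uhg4] at vhg3
    subst E1
    have z : (l2 * (l2 - 1)) * g a b c d = 0 := by
      linear_combination vhg3
    have z' := (mul_eq_zero.mp z).resolve_right hv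
    clear * - z' l2n l3n l4n
    grind
  have E3 : l3 = 1 := by
    obtain ⟨va1, vb1, vc1, vd1, vha1, vhb1, vhc1, vhd1, vhg1⟩ := K2 a b c d
    obtain ⟨va2, vb2, vc2, vd2, vha2, vhb2, vhc2, vhd2, vhg2⟩ := K3 va1 vb1 vc1 vd1
    obtain ⟨va3, vb3, vc3, vd3, vha3, vhb3, vhc3, vhd3, vhg3⟩ := K2 va2 vb2 vc2 vd2
    obtain ⟨ua1, ub1, uc1, ud1, uha1, uhb1, uhc1, uhd1, uhg1⟩ := K3 a b c d
    obtain ⟨ua2, ub2, uc2, ud2, uha2, uhb2, uhc2, uhd2, uhg2⟩ := K2 ua1 ub1 uc1 ud1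
    obtain ⟨ua3, ub3, uc3, ud3, uha3, uhb3, uhc3, uhd3, uhg3⟩ := K3 ua2 ub2 uc2 ud2
    have qa : va3 = ua3 := by
      clear hk hg hf Hs H1 K1 K2 K3 K4 hv vhg1 vhg2 vhg3 uhg1 uhg2 uhg3
      subst_vars; grind
    have qb : vb3 = ub3 := by
      clear hk hg hf Hs H1 K1 K2 K3 K4 hv vhg1 vhg2 vhg3 uhg1 uhg2 uhg3
      subst_vars; grind
    have qc : vc3 = uc3 := by
      clear hk hg hf Hs H1 K1 K2 K3 K4 hv vhg1 vhg2 vhg3 uhg1 uhg2 uhg3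
      subst_vars; grind
    have qd : vd3 = ud3 := by
      clear hk hg hf Hs H1 K1 K2 K3 K4 hv vhg1 vhg2 vhg3 uhg1 uhg2 uhg3
      subst_vars; grind
    rw [qa, qb, qc, qd] at vhg3
    rw [vhg1] at vhg2
    rw [vhg2] at vhg3
    rw [uhg1] at uhg2
    rw [uhg2] at uhg3
    subst E2
    have z : (l3 * (l3 - 1)) * g a b c d = 0 := by
      linear_combination vhg3 - uhg3
    have z' := (mul_eq_zero.mp z).resolve_right hv
    clear * - z' l2n l3n l4n
    grind
  have E4 : l4 = 1 := by
    obtain ⟨va1, vb1, vc1, vd1, vha1, vhb1, vhc1, vhd1, vhg1⟩ := K3 a b c d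
    obtain ⟨va2, vb2, vc2, vd2, vha2, vhb2, vhc2, vhd2, vhg2⟩ := K4 va1 vb1 vc1 vd1
    obtain ⟨va3, vb3, vc3, vd3, vha3, vhb3, vhc3, vhd3, vhg3⟩ := K3 va2 vb2 vc2 vd2
    obtain ⟨ua1, ub1, uc1, ud1, uha1, uhb1, uhc1, uhd1, uhg1⟩ := K4 a b c d
    obtain ⟨ua2, ub2, uc2, ud2, uha2, uhb2, uhc2, uhd2, uhg2⟩ := K3 ua1 ub1 uc1 ud1
    obtain ⟨ua3, ub3, uc3, ud3, uha3, uhb3, uhc3, uhd3, uhg3⟩ := K4 ua2 ub2 uc2 ud2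
    have hs := Hs (-1) ua3 ub3 uc3 ud3
    have qa : va3 = (-1) * ua3 := by
      clear hk hg hf Hs H1 K1 K2 K3 K4 hv hs vhg1 vhg2 vhg3 uhg1 uhg2 uhg3
      subst_vars; grind
    have qb : vb3 = (-1) * ub3 := by
      clear hk hg hf Hs H1 K1 K2 K3 K4 hv hs vhg1 vhg2 vhg3 uhg1 uhg2 uhg3
      subst_vars; grind
    have qc : vc3 = (-1) * uc3 := by
      clear hk hg hf Hs H1 K1 K2 K3 K4 hv hs vhg1 vhg2 vhg3 uhg1 uhg2 uhg3
      subst_vars; grind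
    have qd : vd3 = (-1) * ud3 := by
      clear hk hg hf Hs H1 K1 K2 K3 K4 hv hs vhg1 vhg2 vhg3 uhg1 uhg2 uhg3
      subst_vars; grind
    rw [qa, qb, qc, qd] at vhg3
    rw [vhg1] at vhg2
    rw [vhg2] at vhg3
    rw [uhg1] at uhg2
    rw [uhg2] at uhg3
    subst E3
    rw [hs, uhg3] at vhg3
    have z : (l4 * (l4 - 1)) * g a b c d = 0 := by
      linear_combination vhg3
    have z' := (mul_eq_zero.mp z).resolve_right hv
    clear * - z' l2n l3n l4n
    grind
  subst E1 E2 E3 E4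
  clear Hs
  obtain ⟨p0, p1, p2, p3, p4, q0, q1, q2, r, m0, m1, n0, n1, G⟩ :=
    reduce13 k w hww g (fun a b c d => by rw [hg, hk]) (fun a b c d => by
      obtain ⟨a', b', c', d', rfl, rfl, rfl, rfl, e⟩ := K1 a b c d
      rw [e, one_mul])
  have J2 : ∀ a b c d, g (x / 3 * (a + y * d)) (x / 3 * (-b + y * c)) (x / 3 * (y * b + c))
      (x / 3 * (y * a - d)) = g a b c d := by
    intro a b c d
    obtain ⟨a', b', c', d', rfl, rfl, rfl, rfl, e⟩ := K2 a b c d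
    rw [e, one_mul]
  have J3 : ∀ a b c d, g (x / 2 * a + b / 2) (a / 2 - x / 2 * b) d c = g a b c d := by
    intro a b c d
    obtain ⟨a', b', c', d', rfl, rfl, rfl, rfl, e⟩ := K3 a b c d
    rw [e, one_mul]
  have J4 : ∀ a b c d, g b a (-d) (-c) = g a b c d := by
    intro a b c d
    obtain ⟨a', b', c', d', rfl, rfl, rfl, rfl, e⟩ := K4 a b c d
    rw [e, one_mul]
  apply hv
  rw [G]
  clear K1 K2 K3 K4 hk hg hf hv
  simp only [G] at J2 J3 J4
  clear G
  have a1 : p4 = p0 := by linear_combination J4 1 0 0 0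
  have a2 : n1 = -m0 := by linear_combination J4 1 0 0 0 - J4 1 0 1 0
  have a3 : n0 = -m1 := by linear_combination J4 0 1 0 0 - J4 0 1 1 0
  have a4 : p3 = p1 := by linear_combination (-1 / 6) * J4 1 2 0 0 - (15 / 6) * a1
  have a5 : q2 = q0 := by linear_combination J4 1 0 1 1 - a1 + a2 + a3
  subst p4 n1 n0 p3 q2
  have b1 := J3 1 0 0 0
  have b2 := J3 1 0 1 0
  have b3 := J3 0 1 1 0
  have b4 := J3 0 1 0 0
  have b5 := J3 1 0 1 1
  have b6 := J3 1 1 0 0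
  have b7 := J3 1 (-1) 0 0
  have b8 := J3 1 2 0 0
  have d1 := J2 1 0 0 0
  have d2 := J2 1 0 1 0
  have d3 := J2 1 0 (-1) 0
  clear J2 J3 J4
  have f1 : m0 = 0 := by grind
  have f2 : m1 = 0 := by grind
  subst f1 f2
  have f3 : q1 = 0 := by grind
  subst f3
  have f4 : p0 = 0 := by grind
  subst f4
  have f5 : p1 = 0 := by grind
  have f6 : p2 = 0 := by grind
  subst f5 f6
  have f7 : r = 0 := by grind
  have f8 : q0 = 0 := by grind
  subst f7 f8
  ring
end
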